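/- Let X be a set with at most 3 elements and let f: X × X × X → X be a symmetric ternary map (invariant under every permutation of the three arguments). If there exists a binary map *: X × X → X with f(x,y,z) = (x*y)*z for all x,y,z ∈ X, then there also exists a commutative binary map ∘: X × X → X (i.e., x∘y = y∘x for all x,y) with f(x,y,z) = (x∘y)∘z for all x,y,z ∈ X. -/

import Mathlib

/-!
Write `xy` for `op x y`. Symmetry of `(xy)z` makes any two products commute, `(ab)(cd) = (cd)(ab)`,
since both sides are the fourfold product `((ab)c)d` up to a permutation of the factors. Hence a
surjective `op` is itself commutative. If `op` is not surjective on a set with at most three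
elements, there are at most two products. When `ab ≠ ba`, these are exactly the products; they act
identically from the left because `(ab)z = (ba)z`. So `(xy)z` depends on `z` alone, and being
symmetric it is constant: a constant operation then represents it.
-/

/-- The ternary map `(x, y, z) ↦ op (op x y) z` is symmetric. Only invariance under the two
adjacent transpositions is recorded, as they generate `S₃`. -/
structure IsTernarySymmetric {X : Type*} (op : X → X → X) : Prop where
  swap_left (x y z : X) : op (op x y) z = op (op y x) z
  swap_right (x y z : X) : op (op x y) z = op (op x z) y

namespace IsTernarySymmetric

open Function Set

variable {X : Type*} {op : X → X → X}

local infixl:70 " ⋆ " => op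

theorem rotate (h : IsTernarySymmetric op) (x y z : X) : x ⋆ y ⋆ z = z ⋆ x ⋆ y := by
  rw [h.swap_right, h.swap_left]

theorem op_op_comm (h : IsTernarySymmetric op) (a b c d : X) :
    (a ⋆ b) ⋆ (c ⋆ d) = (c ⋆ d) ⋆ (a ⋆ b) :=
  calc
    (a ⋆ b) ⋆ (c ⋆ d) = c ⋆ d ⋆ a ⋆ b := h.rotate a b (c ⋆ d)
    _ = a ⋆ c ⋆ d ⋆ b := by rw [h.rotate c d a]
    _ = a ⋆ c ⋆ b ⋆ d := h.swap_right (a ⋆ c) d b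
    _ = a ⋆ b ⋆ c ⋆ d := by rw [h.swap_right a c b]
    _ = (c ⋆ d) ⋆ (a ⋆ b) := (h.rotate c d (a ⋆ b)).symm

theorem comm_of_surjective (h : IsTernarySymmetric op) (hop : Surjective (uncurry op)) (x y : X) :
    x ⋆ y = y ⋆ x := by
  obtain ⟨⟨a, b⟩, rfl⟩ := hop x
  obtain ⟨⟨c, d⟩, rfl⟩ := hop y
  exact h.op_op_comm a b c d

theorem exists_op_op_eq_of_encard_range_le_two (h : IsTernarySymmetric op)
    (hcard : (range (uncurry op)).encard ≤ 2) {a b : X} (hab : a ⋆ b ≠ b ⋆ a) :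
    ∃ c, ∀ x y z, x ⋆ y ⋆ z = c := by
  have hrange : {a ⋆ b, b ⋆ a} = range (uncurry op) := by
    refine (toFinite _).eq_of_subset_of_encard_le (pair_subset ⟨(a, b), rfl⟩ ⟨(b, a), rfl⟩) ?_
    rwa [encard_pair hab]
  have hleft (x y z : X) : x ⋆ y ⋆ z = a ⋆ b ⋆ z := by
    have hxy : x ⋆ y ∈ ({a ⋆ b, b ⋆ a} : Set X) := hrange ▸ ⟨(x, y), rfl⟩
    obtain hxy | hxy := hxy
    · rw [hxy]
    · rw [hxy, h.swap_left]
  refine ⟨a ⋆ b ⋆ a, fun x y z => ?_⟩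
  calc
    x ⋆ y ⋆ z = a ⋆ a ⋆ z := by rw [hleft x y, hleft a a]
    _ = a ⋆ z ⋆ a := h.swap_right a a z
    _ = a ⋆ b ⋆ a := hleft a z a

theorem exists_comm_of_encard_range_le_two (h : IsTernarySymmetric op)
    (hcard : (range (uncurry op)).encard ≤ 2) :
    ∃ op' : X → X → X, (∀ x y, op' x y = op' y x) ∧ ∀ x y z, x ⋆ y ⋆ z = op' (op' x y) z := by
  by_cases hcomm : ∀ x y, x ⋆ y = y ⋆ x
  · exact ⟨op, hcomm, fun _ _ _ => rfl⟩
  · push Not at hcomm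
    obtain ⟨a, b, hab⟩ := hcomm
    obtain ⟨c, hc⟩ := h.exists_op_op_eq_of_encard_range_le_two hcard hab
    exact ⟨fun _ _ => c, fun _ _ => rfl, hc⟩

end IsTernarySymmetric

theorem encard_range_le_of_not_surjective {α β : Type*} [Finite β] {n : ℕ}
    (hβ : Nat.card β ≤ n + 1) {g : α → β} (hg : ¬ Function.Surjective g) :
    (Set.range g).encard ≤ n := by
  have hlt : (Set.range g).ncard < Nat.card β := Set.ncard_lt_card (mt Set.range_eq_univ.mp hg)
  rw [← (Set.range g).toFinite.cast_ncard_eq]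
  exact_mod_cast (by omega : (Set.range g).ncard ≤ n)

/-- On a set with at most 3 elements, every symmetric ternary map (invariant under every
permutation of the three arguments) representable as `f (x, y, z) = (x*y)*z` for some binary
map `*` is also representable in this form for some commutative binary map. -/
theorem symmetric_ternary_representable_commutative (X : Type*) [Finite X]
    (hX : Nat.card X ≤ 3) (f : X → X → X → X)
    (hsym₁ : ∀ x y z, f x y z = f y x z) (hsym₂ : ∀ x y z, f x y z = f x z y)
    (h : ∃ op : X → X → X, ∀ x y z, f x y z = op (op x y) z) :
    ∃ op : X → X → X, (∀ x y, op x y = op y x) ∧ ∀ x y z, f x y z = op (op x y) z := by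
  obtain ⟨op, hop⟩ := h
  simp only [hop] at hsym₁ hsym₂ ⊢
  have hsymm : IsTernarySymmetric op := ⟨hsym₁, hsym₂⟩
  by_cases hsurj : Function.Surjective (Function.uncurry op)
  · exact ⟨op, hsymm.comm_of_surjective hsurj, fun _ _ _ => rfl⟩
  · exact hsymm.exists_comm_of_encard_range_le_two (encard_range_le_of_not_surjective hX hsurj)
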